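/- Let A be a bounded linear operator on H, let (e_j)_{j∈J} be a Hilbert (orthonormal) basis of H, and let (v_i)_{i=1,…,d} be an orthonormal basis of V. Then, as an identity in [0, ∞], Σ_{j∈J} ‖A e_j‖²_H = ∫_N ∫_N Σ_{i=1}^d ‖K^A(x,y) v_i‖²_V dμ(x) dμ(y). (That is, the squared Hilbert–Schmidt norm of A equals the double integral of the squared Hilbert–Schmidt norms of the full symbol K^A(x,y).) -/

import Mathlib

open MeasureTheory
open scoped ComplexInnerProductSpace ENNReal NNReal

/-!
Write `F j y = ‖K_y (A^* e_j)‖²`. Parseval in `H` and in `V` turns `∑ᵢ ‖A K_y^* vᵢ‖²` into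
`∑ⱼ F j y`, and the isometry `H → L²(N, V; μ)` evaluates the inner integral as `∑ᵢ ‖A K_y^* vᵢ‖²`
and each `∫ F j dμ` as `‖A^* e_j‖²`. A further use of Parseval gives
`∑ⱼ ‖A^* e_j‖² = ∑ⱼ ‖A e_j‖²`, so it remains to exchange `∑ⱼ` with the integral.

The index set `J` may be uncountable, so monotone convergence does not apply directly. However,
finite partial sums always give `∑ⱼ ∫ F j ≤ ∫ ∑ⱼ F j`, which settles the case of an infinite
left-hand side; and if `∑ⱼ ‖A^* e_j‖²` is finite, then `A^* e_j = 0`, hence `F j = 0`, for all but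
countably many `j`.
-/

namespace BerezinHS

lemma coe_nnnorm_sq {E : Type*} [NormedAddCommGroup E] (x : E) :
    (‖x‖₊ : ℝ≥0∞) ^ 2 = ENNReal.ofReal (‖x‖ ^ 2) := by
  rw [ENNReal.ofReal_pow (norm_nonneg _), ofReal_norm, enorm_eq_nnnorm]

lemma hilbertBasis_parseval {J H : Type*} [NormedAddCommGroup H] [InnerProductSpace ℂ H]
    (e : HilbertBasis J ℂ H) (f : H) :
    ∑' j, (‖⟪e j, f⟫‖₊ : ℝ≥0∞) ^ 2 = (‖f‖₊ : ℝ≥0∞) ^ 2 := by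
  have h : HasSum (fun j => ‖⟪e j, f⟫‖ ^ 2) (‖f‖ ^ 2) := by
    have h1 := (e.hasSum_inner_mul_inner f f).mapL Complex.reCLM
    convert h1 using 1
    · funext j
      simp only [Complex.reCLM_apply]
      rw [← inner_conj_symm f (e j), ← Complex.normSq_eq_conj_mul_self, Complex.ofReal_re,
        Complex.normSq_eq_norm_sq]
    · simp only [Complex.reCLM_apply]
      exact norm_sq_eq_re_inner (𝕜 := ℂ) f
  simp_rw [coe_nnnorm_sq]
  rw [← ENNReal.ofReal_tsum_of_nonneg (fun _ => by positivity) h.summable, h.tsum_eq]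

lemma orthonormalBasis_parseval {ι V : Type*} [Fintype ι] [NormedAddCommGroup V]
    [InnerProductSpace ℂ V] (v : OrthonormalBasis ι ℂ V) (w : V) :
    ∑ i, (‖⟪v i, w⟫‖₊ : ℝ≥0∞) ^ 2 = (‖w‖₊ : ℝ≥0∞) ^ 2 := by
  simp_rw [coe_nnnorm_sq]
  rw [← ENNReal.ofReal_sum_of_nonneg (fun _ _ => by positivity), v.sum_sq_norm_inner_right]

lemma nnnorm_inner_symm {E : Type*} [NormedAddCommGroup E] [InnerProductSpace ℂ E] (x y : E) :
    ‖⟪x, y⟫‖₊ = ‖⟪y, x⟫‖₊ :=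
  NNReal.eq (norm_inner_symm x y)

/-- The Hilbert–Schmidt norms of `A` and `A^*`, computed in the same basis, agree. -/
lemma tsum_adjoint {J H : Type*} [NormedAddCommGroup H] [InnerProductSpace ℂ H] [CompleteSpace H]
    (e : HilbertBasis J ℂ H) (A : H →L[ℂ] H) :
    ∑' j, (‖A (e j)‖₊ : ℝ≥0∞) ^ 2
      = ∑' j, (‖ContinuousLinearMap.adjoint A (e j)‖₊ : ℝ≥0∞) ^ 2 := by
  simp_rw [← hilbertBasis_parseval e (A _), ← hilbertBasis_parseval e
    (ContinuousLinearMap.adjoint A _), ContinuousLinearMap.adjoint_inner_right]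
  rw [ENNReal.tsum_comm]
  simp_rw [nnnorm_inner_symm (A _)]

/-- The pointwise identity `∑ᵢ ‖A T^* vᵢ‖² = ∑ⱼ ‖T A^* e_j‖²`. -/
lemma sum_eq_tsum {J ι V H : Type*} [Fintype ι] [NormedAddCommGroup V] [InnerProductSpace ℂ V]
    [CompleteSpace V] [NormedAddCommGroup H] [InnerProductSpace ℂ H] [CompleteSpace H]
    (e : HilbertBasis J ℂ H) (v : OrthonormalBasis ι ℂ V) (A : H →L[ℂ] H) (T : H →L[ℂ] V) :
    ∑ i, (‖A (ContinuousLinearMap.adjoint T (v i))‖₊ : ℝ≥0∞) ^ 2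
      = ∑' j, (‖T (ContinuousLinearMap.adjoint A (e j))‖₊ : ℝ≥0∞) ^ 2 := by
  simp_rw [← hilbertBasis_parseval e (A _), ← orthonormalBasis_parseval v (T _)]
  rw [Summable.tsum_finsetSum (fun _ _ => ENNReal.summable)]
  refine Finset.sum_congr rfl fun i _ => tsum_congr fun j => ?_
  rw [← ContinuousLinearMap.adjoint_inner_left A, ← ContinuousLinearMap.adjoint_inner_left T,
    nnnorm_inner_symm]

section Embedding

variable {N V H : Type*} [NormedAddCommGroup V] [InnerProductSpace ℂ V]
  [NormedAddCommGroup H] [InnerProductSpace ℂ H] [MeasurableSpace N] {μ : Measure N}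
  {K : N → H →L[ℂ] V}

lemma aemeasurable_nnnorm_sq (hmeas : ∀ f : H, AEStronglyMeasurable (fun x => (K x) f) μ) (f : H) :
    AEMeasurable (fun x => (‖K x f‖₊ : ℝ≥0∞) ^ 2) μ := by
  simpa only [enorm_eq_nnnorm] using (hmeas f).enorm.pow_const 2

lemma lintegral_nnnorm_sq (hembed : ∀ g h : H, ⟪g, h⟫ = ∫ y, ⟪(K y) g, (K y) h⟫ ∂μ) (f : H) :
    ∫⁻ x, (‖K x f‖₊ : ℝ≥0∞) ^ 2 ∂μ = (‖f‖₊ : ℝ≥0∞) ^ 2 := by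
  rcases eq_or_ne f 0 with rfl | hf
  · simp
  have h1 : ((‖f‖ ^ 2 : ℝ) : ℂ) = ∫ y, ((‖K y f‖ ^ 2 : ℝ) : ℂ) ∂μ := by
    have := hembed f f
    simp_rw [inner_self_eq_norm_sq_to_K] at this
    simpa using this
  rw [integral_complex_ofReal] at h1
  have h2 : ‖f‖ ^ 2 = ∫ y, ‖K y f‖ ^ 2 ∂μ := by exact_mod_cast h1
  -- The Bochner integral is nonzero, so it is not a junk value.
  have hint : Integrable (fun y => ‖K y f‖ ^ 2) μ := by
    by_contra hn
    rw [integral_undef hn] at h2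
    exact hf (by simpa using h2)
  simp_rw [coe_nnnorm_sq]
  rw [h2, ofReal_integral_eq_lintegral_ofReal hint (ae_of_all _ fun _ => by positivity)]

/-- Exchange of an arbitrary, possibly uncountable, sum with the integral. -/
lemma lintegral_tsum_nnnorm_sq (hmeas : ∀ f : H, AEStronglyMeasurable (fun x => (K x) f) μ)
    (hembed : ∀ g h : H, ⟪g, h⟫ = ∫ y, ⟪(K y) g, (K y) h⟫ ∂μ) {J : Type*} (b : J → H) :
    ∫⁻ y, ∑' j, (‖K y (b j)‖₊ : ℝ≥0∞) ^ 2 ∂μ = ∑' j, (‖b j‖₊ : ℝ≥0∞) ^ 2 := by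
  refine le_antisymm ?_ ?_
  · rcases eq_or_ne (∑' j, (‖b j‖₊ : ℝ≥0∞) ^ 2) ∞ with htop | hfin
    · rw [htop]
      exact le_top
    set S : Set J := Function.support fun j => (‖b j‖₊ : ℝ≥0∞) ^ 2 with hS
    have hcount : Countable S := (Summable.countable_support_ennreal hfin).to_subtype
    have hz : ∀ y, (Function.support fun j => (‖K y (b j)‖₊ : ℝ≥0∞) ^ 2) ⊆ S := by
      intro y j hj hj0
      have : b j = 0 := by simpa using hj0
      exact hj (by simp [this])
    simp_rw [← fun y => tsum_subtype_eq_of_support_subset (hz y)]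
    rw [lintegral_tsum fun j : S => aemeasurable_nnnorm_sq hmeas (b j)]
    simp_rw [lintegral_nnnorm_sq hembed]
    exact ENNReal.tsum_comp_le_tsum_of_injective Subtype.val_injective _
  · rw [ENNReal.tsum_eq_iSup_sum]
    refine iSup_le fun s => ?_
    simp_rw [← lintegral_nnnorm_sq hembed (b _)]
    rw [← lintegral_finsetSum' s fun j _ => aemeasurable_nnnorm_sq hmeas (b j)]
    exact lintegral_mono fun y => ENNReal.sum_le_tsum s

end Embedding

end BerezinHS

/-- the squared Hilbert–Schmidt norm of `A` equals the double integral of the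
squared Hilbert–Schmidt norms of the full symbol `K^A(x,y) = K_x ∘ A ∘ K_y^*`
(an identity in `[0,∞]`). -/
theorem berezin_full_symbol_hilbert_schmidt_norm
    {N V H : Type*} [NormedAddCommGroup V] [InnerProductSpace ℂ V] [FiniteDimensional ℂ V]
    [NormedAddCommGroup H] [InnerProductSpace ℂ H] [CompleteSpace H]
    [MeasurableSpace N] (μ : Measure N)
    (K : N → H →L[ℂ] V)
    (htotal : (Submodule.span ℂ
        {f : H | ∃ (x : N) (v : V), f = ContinuousLinearMap.adjoint (K x) v}).topologicalClosure
      = ⊤)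
    (hmeas : ∀ f : H, AEStronglyMeasurable (fun x => (K x) f) μ)
    (hembed : ∀ g h : H, ⟪g, h⟫ = ∫ y, ⟪(K y) g, (K y) h⟫ ∂μ)
    (A : H →L[ℂ] H) {J : Type*} (e : HilbertBasis J ℂ H)
    {d : ℕ} (v : OrthonormalBasis (Fin d) ℂ V) :
    ∑' j : J, (‖A (e j)‖₊ : ℝ≥0∞) ^ 2 =
      ∫⁻ y, ∫⁻ x,
        ∑ i : Fin d,
          (‖(K x) (A (ContinuousLinearMap.adjoint (K y) (v i)))‖₊ : ℝ≥0∞) ^ 2 ∂μ ∂μ := by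
  rw [BerezinHS.tsum_adjoint e A, ← BerezinHS.lintegral_tsum_nnnorm_sq hmeas hembed]
  refine lintegral_congr fun y => ?_
  rw [lintegral_finsetSum' _ fun i _ => BerezinHS.aemeasurable_nnnorm_sq hmeas _]
  simp_rw [BerezinHS.lintegral_nnnorm_sq hembed]
  exact (BerezinHS.sum_eq_tsum e v A (K y)).symm
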